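/- arXiv:2308.01714 — 3 statements merged into one kernel-verified Lean document; each statement's English description precedes it below -/
import Mathlib

section
/- Let d ≥ 2, let |ψ⟩, |φ⟩ be unit vectors in ℂ^d, and let U be Haar-distributed on U(d). Then for every t ∈ [0,1], the probability that |⟨φ, Uψ⟩|² ≤ t equals 1 − (1−t)^{d−1}; equivalently, the fidelity |⟨φ, Uψ⟩|² has probability density f ↦ (d−1)(1−f)^{d−2} on [0,1]. -/
open MeasureTheory Matrix Finset
open scoped ComplexConjugate

noncomputable section

/-- Borel measurable structure on the unitary group `U(d)`. -/
instance (n : Type*) [Fintype n] [DecidableEq n] :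
    MeasurableSpace (Matrix.unitaryGroup n ℂ) := borel _

instance (n : Type*) [Fintype n] [DecidableEq n] :
    BorelSpace (Matrix.unitaryGroup n ℂ) := ⟨rfl⟩

/-- The standard Hermitian inner product on `ℂ^d`, identified with `Fin d → ℂ`. -/
def vecInner {d : ℕ} (x y : Fin d → ℂ) : ℂ := ∑ i : Fin d, conj (x i) * y i

theorem vecInner_eq {d : ℕ} (x y : Fin d → ℂ) : vecInner x y = star x ⬝ᵥ y := by
  simp [vecInner, dotProduct]

theorem vecInner_mulVec_left {d : ℕ} (A : Matrix (Fin d) (Fin d) ℂ) (x y : Fin d → ℂ) :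
    vecInner (A *ᵥ x) y = vecInner x (Aᴴ *ᵥ y) := by
  rw [vecInner_eq, vecInner_eq, star_mulVec, dotProduct_mulVec]

theorem vecInner_self {d : ℕ} (x : Fin d → ℂ) :
    vecInner x x = ((∑ i, ‖x i‖ ^ 2 : ℝ) : ℂ) := by
  simp [vecInner, Complex.conj_mul']

theorem unitary_normsq {d : ℕ} (U : Matrix.unitaryGroup (Fin d) ℂ) (x : Fin d → ℂ) :
    ∑ i, ‖((U : Matrix (Fin d) (Fin d) ℂ) *ᵥ x) i‖ ^ 2 = ∑ i, ‖x i‖ ^ 2 := by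
  have h := vecInner_mulVec_left (U : Matrix (Fin d) (Fin d) ℂ) x (U *ᵥ x)
  have hU : (U : Matrix (Fin d) (Fin d) ℂ)ᴴ * U = 1 := (Matrix.mem_unitaryGroup_iff').1 U.2
  rw [mulVec_mulVec, hU, one_mulVec, vecInner_self, vecInner_self] at h
  exact_mod_cast h

theorem exists_unitary_single {n : ℕ} (x : Fin (n+1) → ℂ) (hx : ∑ i, ‖x i‖ ^ 2 = 1) :
    ∃ V : Matrix.unitaryGroup (Fin (n+1)) ℂ,
      (V : Matrix (Fin (n+1)) (Fin (n+1)) ℂ) *ᵥ (Pi.single 0 1) = x := by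
  have hv : Orthonormal ℂ (({0} : Set (Fin (n+1))).domRestrict
      (fun _ : Fin (n+1) => (WithLp.toLp 2 x : EuclideanSpace ℂ (Fin (n+1))))) := by
    constructor
    · intro i
      simp [EuclideanSpace.norm_eq, hx]
    · intro i j hij
      exact absurd (Subsingleton.elim i j) hij
  obtain ⟨b, hb⟩ := hv.exists_orthonormalBasis_extension_of_card_eq (by simp)
  refine ⟨⟨_, (EuclideanSpace.basisFun (Fin (n+1)) ℂ).toMatrix_orthonormalBasis_mem_unitary b⟩, ?_⟩
  ext i
  have := hb 0 rfl
  simp [Module.Basis.toMatrix_apply, this]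

theorem exists_unitary_map {n : ℕ} (x y : Fin (n+1) → ℂ) (hx : ∑ i, ‖x i‖ ^ 2 = 1)
    (hy : ∑ i, ‖y i‖ ^ 2 = 1) :
    ∃ V : Matrix.unitaryGroup (Fin (n+1)) ℂ,
      (V : Matrix (Fin (n+1)) (Fin (n+1)) ℂ) *ᵥ x = y := by
  obtain ⟨V, hV⟩ := exists_unitary_single x hx
  obtain ⟨W, hW⟩ := exists_unitary_single y hy
  refine ⟨W * V⁻¹, ?_⟩
  have hU : (V : Matrix (Fin (n+1)) (Fin (n+1)) ℂ)ᴴ * V = 1 := (Matrix.mem_unitaryGroup_iff').1 V.2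
  rw [← hV, ← hW]
  simp only [Matrix.UnitaryGroup.mul_val, Matrix.UnitaryGroup.inv_val, mulVec_mulVec, Matrix.mul_assoc]
  rw [star_eq_conjTranspose, hU, Matrix.mul_one]

theorem unitary_measurePreserving {d : ℕ} (U : Matrix.unitaryGroup (Fin d) ℂ) :
    MeasurePreserving (fun x : Fin d → ℂ => (U : Matrix (Fin d) (Fin d) ℂ) *ᵥ x) := by
  let f : (Fin d → ℂ) →ₗ[ℝ] (Fin d → ℂ) :=
    (Matrix.toLin' (U : Matrix (Fin d) (Fin d) ℂ)).restrictScalars ℝ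
  have hdet : |LinearMap.det f| = 1 := by
    rw [LinearMap.det_restrictScalars, LinearMap.det_toLin', Algebra.norm_complex_apply, Complex.normSq_eq_norm_sq]
    have : ‖(U : Matrix (Fin d) (Fin d) ℂ).det‖ = 1 := by
      have := Matrix.det_of_mem_unitary U.2
      exact CStarRing.norm_of_mem_unitary this
    simp [this]
  have h0 : LinearMap.det f ≠ 0 := by
    intro h; simp [h] at hdet
  have := Measure.map_linearMap_addHaar_eq_smul_addHaar (volume : Measure (Fin d → ℂ)) h0
  rw [abs_inv, hdet] at this
  refine ⟨?_, ?_⟩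
  · exact (by fun_prop : Continuous (fun x : Fin d → ℂ => (U : Matrix (Fin d) (Fin d) ℂ) *ᵥ x)).measurable
  · have h2 : (⇑f) = fun x : Fin d → ℂ => (U : Matrix (Fin d) (Fin d) ℂ) *ᵥ x := rfl
    rw [h2] at this
    simpa using this

theorem lintegral_tail (c a : ℝ) (hc : 0 < c) (ha : 0 ≤ a) :
    ∫⁻ w : ℂ, {w : ℂ | a < ‖w‖ ^ 2}.indicator (fun w => ENNReal.ofReal (Real.exp (-c * ‖w‖ ^ 2))) w
      = ENNReal.ofReal (Real.pi / c * Real.exp (-c * a)) := by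
  rw [← Complex.lintegral_comp_polarCoord_symm, polarCoord_target, Measure.volume_eq_prod,
    ← Measure.prod_restrict]
  have h1 : ∀ p : ℝ × ℝ, p.1 ∈ Set.Ioi (0:ℝ) → 
     (ENNReal.ofReal p.1 • {w : ℂ | a < ‖w‖ ^ 2}.indicator (fun w => ENNReal.ofReal (Real.exp (-c * ‖w‖ ^ 2))) (Complex.polarCoord.symm p))
     = (Set.Ioi √a).indicator (fun r => ENNReal.ofReal (r * Real.exp (-c * r ^ 2))) p.1 := by
    intro p hp
    have hp' : 0 < p.1 := hp
    have hn : ‖Complex.polarCoord.symm p‖ = p.1 := by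
      rw [Complex.norm_polarCoord_symm, abs_of_pos hp']
    by_cases h : √a < p.1
    · have h2 : a < p.1 ^ 2 := (Real.sqrt_lt' hp').1 h
      rw [Set.indicator_of_mem (by simpa [hn] using h2), Set.indicator_of_mem (by simpa using h), hn,
        ENNReal.ofReal_mul hp'.le, smul_eq_mul]
    · have h2 : ¬ a < p.1 ^ 2 := fun h' => h ((Real.sqrt_lt' hp').2 h')
      rw [Set.indicator_of_notMem (by simpa [hn] using h2), Set.indicator_of_notMem (by simpa using h)]
      simp
  have h2 := integral_Ioi_of_hasDerivAt_of_nonneg' (a := √a) (l := 0)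
    (g := fun r => -(1 / (2 * c)) * Real.exp (-c * r ^ 2)) (g' := fun r => r * Real.exp (-c * r ^ 2))
    (by
      intro x _
      have := (((hasDerivAt_pow 2 x).const_mul (-c)).exp).const_mul (-(1 / (2 * c)))
      refine HasDerivAt.congr_deriv this ?_
      have := hc.ne'
      generalize Real.exp (-c * x ^ 2) = E
      field_simp
      norm_num
      left
      ring)
    (by
      intro x hx
      have : 0 ≤ x := (Real.sqrt_nonneg a).trans (le_of_lt hx)
      positivity)
    (by
      rw [← mul_zero (-(1 / (2 * c)))]
      refine Filter.Tendsto.const_mul _ (Real.tendsto_exp_atBot.comp ?_)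
      exact (Filter.tendsto_pow_atTop (by norm_num)).const_mul_atTop_of_neg (by linarith))
  have h3 := integrableOn_Ioi_deriv_of_nonneg' (a := √a) (l := 0)
    (g := fun r => -(1 / (2 * c)) * Real.exp (-c * r ^ 2)) (g' := fun r => r * Real.exp (-c * r ^ 2))
    (by
      intro x _
      have := (((hasDerivAt_pow 2 x).const_mul (-c)).exp).const_mul (-(1 / (2 * c)))
      refine HasDerivAt.congr_deriv this ?_
      have := hc.ne'
      generalize Real.exp (-c * x ^ 2) = E
      field_simp
      norm_num
      left
      ring)
    (by
      intro x hx
      have : 0 ≤ x := (Real.sqrt_nonneg a).trans (le_of_lt hx)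
      positivity)
    (by
      rw [← mul_zero (-(1 / (2 * c)))]
      refine Filter.Tendsto.const_mul _ (Real.tendsto_exp_atBot.comp ?_)
      exact (Filter.tendsto_pow_atTop (by norm_num)).const_mul_atTop_of_neg (by linarith))
  have hm : Measurable (fun r : ℝ => ENNReal.ofReal (r * Real.exp (-c * r ^ 2))) := by fun_prop
  have h4 : ∫⁻ p, (ENNReal.ofReal p.1 • {w : ℂ | a < ‖w‖ ^ 2}.indicator (fun w => ENNReal.ofReal (Real.exp (-c * ‖w‖ ^ 2))) (Complex.polarCoord.symm p)) ∂((volume.restrict (Set.Ioi (0:ℝ))).prod (volume.restrict (Set.Ioo (-Real.pi) Real.pi)))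
     = ∫⁻ p, (Set.Ioi √a).indicator (fun r => ENNReal.ofReal (r * Real.exp (-c * r ^ 2))) p.1 ∂((volume.restrict (Set.Ioi (0:ℝ))).prod (volume.restrict (Set.Ioo (-Real.pi) Real.pi))) := by
    refine lintegral_congr_ae ?_
    rw [Measure.prod_restrict]
    filter_upwards [ae_restrict_mem (measurableSet_Ioi.prod measurableSet_Ioo)] with p hp
    exact h1 p hp.1
  rw [h4, lintegral_prod (fun p : ℝ × ℝ => (Set.Ioi √a).indicator (fun r => ENNReal.ofReal (r * Real.exp (-c * r ^ 2))) p.1) ((hm.indicator measurableSet_Ioi).comp measurable_fst).aemeasurable]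
  simp only [lintegral_const, Measure.restrict_apply_univ, Real.volume_Ioo]
  rw [lintegral_mul_const _ (hm.indicator measurableSet_Ioi), lintegral_indicator measurableSet_Ioi,
    Measure.restrict_restrict measurableSet_Ioi, Set.Ioi_inter_Ioi, max_eq_left (Real.sqrt_nonneg a),
    ← ofReal_integral_eq_lintegral_ofReal h3, h2, ← ENNReal.ofReal_mul]
  · congr 1
    rw [Real.sq_sqrt ha]
    field_simp
    ring
  · rw [Real.sq_sqrt ha]
    have : 0 ≤ 1 / (2 * c) * Real.exp (-c * a) := by positivity
    linarith
  · filter_upwards [ae_restrict_mem measurableSet_Ioi] with x hx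
    have : 0 ≤ x := (Real.sqrt_nonneg a).trans (le_of_lt hx)
    simp only [Pi.zero_apply]
    positivity

theorem lintegral_full (c : ℝ) (hc : 0 < c)  :
    ∫⁻ w : ℂ, ENNReal.ofReal (Real.exp (-c * ‖w‖ ^ 2)) = ENNReal.ofReal (Real.pi / c) := by
  have := lintegral_tail c 0 hc le_rfl
  rw [mul_zero, Real.exp_zero, mul_one] at this
  rw [← this]
  refine lintegral_congr_ae ?_
  have : ∀ᵐ w : ℂ, w ≠ 0 := Measure.ae_ne volume 0
  filter_upwards [this] with w hw
  rw [Set.indicator_of_mem]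
  have := norm_pos_iff.2 hw
  simp only [Set.mem_ofPred_eq]
  positivity

theorem cons_sum (n : ℕ) (p : ℂ × (Fin n → ℂ)) :
    ∑ i, ‖(MeasurableEquiv.piFinSuccAbove (fun _ : Fin (n+1) => ℂ) 0).symm p i‖ ^ 2
      = ‖p.1‖ ^ 2 + ∑ i, ‖p.2 i‖ ^ 2 := by
  rw [Fin.sum_univ_succ]
  rfl

theorem cons_zero' (n : ℕ) (p : ℂ × (Fin n → ℂ)) :
    (MeasurableEquiv.piFinSuccAbove (fun _ : Fin (n+1) => ℂ) 0).symm p 0 = p.1 := rfl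

theorem lintegral_pi_full (n : ℕ) (c : ℝ) (hc : 0 < c) :
    ∫⁻ z : Fin n → ℂ, ENNReal.ofReal (Real.exp (-c * ∑ i, ‖z i‖ ^ 2))
      = ENNReal.ofReal (Real.pi / c) ^ n := by
  induction n with
  | zero => simp [volume_pi]
  | succ n ih =>
    rw [← (volume_preserving_piFinSuccAbove (fun _ : Fin (n+1) => ℂ) 0).symm.lintegral_comp_emb
      (MeasurableEquiv.measurableEmbedding _)]
    simp only [cons_sum, mul_add, Real.exp_add, ENNReal.ofReal_mul (Real.exp_nonneg _)]
    rw [Measure.volume_eq_prod, lintegral_prod_mul (f := fun w : ℂ => ENNReal.ofReal (Real.exp (-c * ‖w‖ ^ 2)))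
      (g := fun z : Fin n → ℂ => ENNReal.ofReal (Real.exp (-c * ∑ i, ‖z i‖ ^ 2))), ih, lintegral_full c hc, pow_succ']
    · exact Measurable.aemeasurable (by fun_prop)
    · exact Measurable.aemeasurable (by fun_prop)

theorem lintegral_pi_tail (n : ℕ) (t : ℝ) (ht : 0 ≤ t) (ht1 : t < 1) :
    ∫⁻ z : Fin (n+1) → ℂ, {z : Fin (n+1) → ℂ | t * ∑ i, ‖z i‖ ^ 2 < ‖z 0‖ ^ 2}.indicator
       (fun z => ENNReal.ofReal (Real.exp (- ∑ i, ‖z i‖ ^ 2))) z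
      = ENNReal.ofReal Real.pi ^ (n + 1) * ENNReal.ofReal ((1 - t) ^ n) := by
  have ht' : 0 < 1 - t := by linarith
  have hms : MeasurableSet {z : Fin (n+1) → ℂ | t * ∑ i, ‖z i‖ ^ 2 < ‖z 0‖ ^ 2} :=
    measurableSet_lt (by fun_prop) (by fun_prop)
  rw [← (volume_preserving_piFinSuccAbove (fun _ : Fin (n+1) => ℂ) 0).symm.lintegral_comp_emb
      (MeasurableEquiv.measurableEmbedding _)]
  rw [Measure.volume_eq_prod, lintegral_prod_symm]
  swap
  · refine Measurable.aemeasurable (Measurable.comp (Measurable.indicator (by fun_prop) hms) (MeasurableEquiv.measurable _))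
  have key : ∀ (y : Fin n → ℂ) (w : ℂ), {z : Fin (n+1) → ℂ | t * ∑ i, ‖z i‖ ^ 2 < ‖z 0‖ ^ 2}.indicator
       (fun z => ENNReal.ofReal (Real.exp (- ∑ i, ‖z i‖ ^ 2))) ((MeasurableEquiv.piFinSuccAbove (fun _ : Fin (n+1) => ℂ) 0).symm (w, y)) = 
       {w : ℂ | t / (1 - t) * ∑ i, ‖y i‖ ^ 2 < ‖w‖ ^ 2}.indicator (fun w => ENNReal.ofReal (Real.exp (-1 * ‖w‖ ^ 2))) w * ENNReal.ofReal (Real.exp (- ∑ i, ‖y i‖ ^ 2)) := by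
    intro y w
    have hiff : t * (‖w‖ ^ 2 + ∑ i, ‖y i‖ ^ 2) < ‖w‖ ^ 2 ↔ t / (1 - t) * ∑ i, ‖y i‖ ^ 2 < ‖w‖ ^ 2 := by
      rw [div_mul_eq_mul_div, div_lt_iff₀ ht']
      constructor <;> intro h <;> nlinarith
    simp only [Set.indicator, Set.mem_ofPred_eq, cons_sum, cons_zero', hiff, neg_add, Real.exp_add]
    split_ifs
    · rw [ENNReal.ofReal_mul (Real.exp_nonneg _), neg_one_mul]
    · simp
  simp only [key]
  have h2 : ∀ y : Fin n → ℂ, ∫⁻ w : ℂ, {w : ℂ | t / (1 - t) * ∑ i, ‖y i‖ ^ 2 < ‖w‖ ^ 2}.indicator (fun w => ENNReal.ofReal (Real.exp (-1 * ‖w‖ ^ 2))) w * ENNReal.ofReal (Real.exp (- ∑ i, ‖y i‖ ^ 2))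
     = ENNReal.ofReal Real.pi * ENNReal.ofReal (Real.exp (- (1 / (1 - t)) * ∑ i, ‖y i‖ ^ 2)) := by
    intro y
    rw [lintegral_mul_const, lintegral_tail _ _ one_pos (by positivity), ← ENNReal.ofReal_mul (by positivity),
      ← ENNReal.ofReal_mul (by positivity), mul_assoc, ← Real.exp_add, div_one]
    · congr 3
      field_simp
      ring
    · exact Measurable.indicator (by fun_prop) (measurableSet_lt (by fun_prop) (by fun_prop))
  simp only [h2]
  rw [lintegral_const_mul _ (by fun_prop), lintegral_pi_full _ _ (by positivity), pow_succ' _ n, mul_assoc,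
    ← ENNReal.ofReal_pow (by positivity), ← ENNReal.ofReal_pow (by positivity), ← ENNReal.ofReal_mul (p := Real.pi ^ n) (by positivity)]
  congr 2
  field_simp
  rw [mul_pow]

theorem haar_tail (n : ℕ) (ψ φ : Fin (n+1) → ℂ) (hψ : ∑ i, ‖ψ i‖ ^ 2 = 1)
    (hφ : ∑ i, ‖φ i‖ ^ 2 = 1)
    (μ : Measure (Matrix.unitaryGroup (Fin (n+1)) ℂ))
    [IsProbabilityMeasure μ] [μ.IsHaarMeasure] (t : ℝ) (ht : 0 ≤ t) (ht1 : t < 1) :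
    μ {U : Matrix.unitaryGroup (Fin (n+1)) ℂ |
          t < ‖vecInner φ ((U : Matrix (Fin (n+1)) (Fin (n+1)) ℂ).mulVec ψ)‖ ^ 2}
      = ENNReal.ofReal ((1 - t) ^ n) := by
  have : SecondCountableTopology (Matrix (Fin (n+1)) (Fin (n+1)) ℂ) :=
    inferInstanceAs (SecondCountableTopology (Fin (n+1) → Fin (n+1) → ℂ))
  have : SecondCountableTopology (Matrix.unitaryGroup (Fin (n+1)) ℂ) :=
    TopologicalSpace.Subtype.secondCountableTopology _
  set p := μ {U : Matrix.unitaryGroup (Fin (n+1)) ℂ |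
          t < ‖vecInner φ ((U : Matrix (Fin (n+1)) (Fin (n+1)) ℂ).mulVec ψ)‖ ^ 2} with hp
  let S : Set (Matrix.unitaryGroup (Fin (n+1)) ℂ × (Fin (n+1) → ℂ)) :=
    {q | t * ∑ i, ‖q.2 i‖ ^ 2 < ‖vecInner q.2 ((q.1 : Matrix (Fin (n+1)) (Fin (n+1)) ℂ).mulVec ψ)‖ ^ 2}
  have hS : MeasurableSet S := by
    apply IsOpen.measurableSet
    apply isOpen_lt
    · fun_prop
    · unfold vecInner
      have : Continuous fun q : (Matrix.unitaryGroup (Fin (n+1)) ℂ × (Fin (n+1) → ℂ)) =>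
        (q.1 : Matrix (Fin (n+1)) (Fin (n+1)) ℂ).mulVec ψ :=
        Continuous.matrix_mulVec (continuous_subtype_val.comp continuous_fst) continuous_const
      fun_prop
  let F : Matrix.unitaryGroup (Fin (n+1)) ℂ → (Fin (n+1) → ℂ) → ENNReal := fun U g =>
    S.indicator (fun q => ENNReal.ofReal (Real.exp (- ∑ i, ‖q.2 i‖ ^ 2))) (U, g)
  have hF : Measurable (Function.uncurry F) := by
    exact Measurable.indicator (by fun_prop) hS
  have hswap := lintegral_lintegral_swap (μ := μ) (ν := (volume : Measure (Fin (n+1) → ℂ)))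
    hF.aemeasurable
  have hL : ∀ U, ∫⁻ g, F U g = ENNReal.ofReal Real.pi ^ (n + 1) * ENNReal.ofReal ((1 - t) ^ n) := by
    intro U
    obtain ⟨V, hV⟩ := exists_unitary_single ((U : Matrix (Fin (n+1)) (Fin (n+1)) ℂ).mulVec ψ)
      (by rw [unitary_normsq, hψ])
    have hUV : (V : Matrix (Fin (n+1)) (Fin (n+1)) ℂ)ᴴ * V = 1 :=
      (Matrix.mem_unitaryGroup_iff').1 V.2
    have hFU : Measurable (F U) := hF.of_uncurry_left
    rw [← lintegral_pi_tail n t ht ht1, ← (unitary_measurePreserving V).lintegral_comp hFU]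
    refine lintegral_congr fun g => ?_
    have h1 : ‖vecInner ((V : Matrix (Fin (n+1)) (Fin (n+1)) ℂ) *ᵥ g)
        ((U : Matrix (Fin (n+1)) (Fin (n+1)) ℂ).mulVec ψ)‖ = ‖g 0‖ := by
      rw [← hV, vecInner_mulVec_left, mulVec_mulVec, hUV, one_mulVec]
      simp [vecInner, Pi.single_apply]
    simp only [F, S, Function.uncurry, Function.comp, Set.indicator, Set.mem_ofPred_eq, unitary_normsq, h1]
  have hR : ∀ g, g ≠ 0 → ∫⁻ U, F U g ∂μ = p * ENNReal.ofReal (Real.exp (-1 * ∑ i, ‖g i‖ ^ 2)) := by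
    intro g hg
    have hN : 0 < ∑ i, ‖g i‖ ^ 2 := by
      obtain ⟨i, hi⟩ := Function.ne_iff.1 hg
      exact Finset.sum_pos' (fun _ _ => by positivity) ⟨i, Finset.mem_univ _, by
        have := norm_pos_iff.2 hi
        positivity⟩
    set N := ∑ i, ‖g i‖ ^ 2 with hNdef
    have hsq : √N ^ 2 = N := Real.sq_sqrt hN.le
    have hs0 : √N ≠ 0 := (Real.sqrt_pos.2 hN).ne'
    obtain ⟨V, hV⟩ := exists_unitary_map φ (fun i => (((√N)⁻¹ : ℝ) : ℂ) * g i) hφ (by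
      simp only [norm_mul, mul_pow, ← Finset.mul_sum, Complex.norm_real, Real.norm_eq_abs, sq_abs, inv_pow, hsq]
      exact inv_mul_cancel₀ hN.ne')
    have h1 : ∀ U : Matrix.unitaryGroup (Fin (n+1)) ℂ,
        ‖vecInner g ((U : Matrix (Fin (n+1)) (Fin (n+1)) ℂ).mulVec ψ)‖ ^ 2
        = N * ‖vecInner φ (((V⁻¹ * U : Matrix.unitaryGroup (Fin (n+1)) ℂ) : Matrix (Fin (n+1)) (Fin (n+1)) ℂ).mulVec ψ)‖ ^ 2 := by
      intro U
      rw [Matrix.UnitaryGroup.mul_val, Matrix.UnitaryGroup.inv_val, star_eq_conjTranspose,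
        ← mulVec_mulVec, ← vecInner_mulVec_left, hV]
      have : vecInner (fun i => (((√N)⁻¹ : ℝ) : ℂ) * g i) ((U : Matrix (Fin (n+1)) (Fin (n+1)) ℂ).mulVec ψ)
        = (((√N)⁻¹ : ℝ) : ℂ) * vecInner g ((U : Matrix (Fin (n+1)) (Fin (n+1)) ℂ).mulVec ψ) := by
        simp only [vecInner, Finset.mul_sum, map_mul, Complex.conj_ofReal, mul_assoc]
      rw [this, norm_mul, mul_pow, Complex.norm_real, Real.norm_eq_abs, sq_abs, inv_pow, hsq]
      field_simp
    have h2 : ∀ U, F U g = ((fun U => V⁻¹ * U) ⁻¹' {U : Matrix.unitaryGroup (Fin (n+1)) ℂ |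
          t < ‖vecInner φ ((U : Matrix (Fin (n+1)) (Fin (n+1)) ℂ).mulVec ψ)‖ ^ 2}).indicator
          (fun _ => ENNReal.ofReal (Real.exp (-1 * ∑ i, ‖g i‖ ^ 2))) U := by
      intro U
      have hiff : t * N < N * ‖vecInner φ (((V⁻¹ * U : Matrix.unitaryGroup (Fin (n+1)) ℂ) : Matrix (Fin (n+1)) (Fin (n+1)) ℂ).mulVec ψ)‖ ^ 2
         ↔ t < ‖vecInner φ (((V⁻¹ * U : Matrix.unitaryGroup (Fin (n+1)) ℂ) : Matrix (Fin (n+1)) (Fin (n+1)) ℂ).mulVec ψ)‖ ^ 2 := by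
        rw [mul_comm t N]
        exact mul_lt_mul_iff_right₀ hN
      simp only [F, S, Set.indicator, Set.mem_ofPred_eq, Set.mem_preimage, h1, ← hNdef, hiff, neg_one_mul]
    have hmeas : MeasurableSet {U : Matrix.unitaryGroup (Fin (n+1)) ℂ |
          t < ‖vecInner φ ((U : Matrix (Fin (n+1)) (Fin (n+1)) ℂ).mulVec ψ)‖ ^ 2} := by
      have : {U : Matrix.unitaryGroup (Fin (n+1)) ℂ |
          t < ‖vecInner φ ((U : Matrix (Fin (n+1)) (Fin (n+1)) ℂ).mulVec ψ)‖ ^ 2} = (fun U => (U, φ)) ⁻¹' S := by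
        ext U
        simp [S, hφ]
      rw [this]
      exact measurable_prodMk_right hS
    simp only [h2]
    rw [lintegral_indicator (hmeas.preimage (measurable_const_mul _)), lintegral_const, Measure.restrict_apply_univ,
      measure_preimage_mul, mul_comm]
  have hR' : ∫⁻ g : Fin (n+1) → ℂ, ∫⁻ U, F U g ∂μ = p * ENNReal.ofReal Real.pi ^ (n + 1) := by
    have hne : ∀ᵐ g : Fin (n+1) → ℂ, g ≠ 0 := Measure.ae_ne volume 0
    rw [lintegral_congr_ae (hne.mono hR), lintegral_const_mul _ (by fun_prop),
      lintegral_pi_full _ _ one_pos, div_one]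
  rw [hR'] at hswap
  simp only [hL, lintegral_const, measure_univ, mul_one] at hswap
  rw [mul_comm p] at hswap
  refine (ENNReal.mul_right_inj ?_ ?_).1 hswap.symm
  · exact pow_ne_zero _ (by simpa using Real.pi_pos)
  · exact ENNReal.pow_ne_top ENNReal.ofReal_ne_top

theorem fid_le_one {n : ℕ} (ψ φ : Fin (n+1) → ℂ) (hψ : ∑ i, ‖ψ i‖ ^ 2 = 1)
    (hφ : ∑ i, ‖φ i‖ ^ 2 = 1) (U : Matrix.unitaryGroup (Fin (n+1)) ℂ) :
    ‖vecInner φ ((U : Matrix (Fin (n+1)) (Fin (n+1)) ℂ).mulVec ψ)‖ ^ 2 ≤ 1 := by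
  have h := unitary_normsq U ψ
  rw [hψ] at h
  set y := (U : Matrix (Fin (n+1)) (Fin (n+1)) ℂ).mulVec ψ
  have h1 : ‖vecInner φ y‖ ≤ ∑ i, ‖φ i‖ * ‖y i‖ := by
    refine (norm_sum_le _ _).trans (le_of_eq ?_)
    simp
  have h2 := Finset.sum_mul_sq_le_sq_mul_sq Finset.univ (fun i => ‖φ i‖) (fun i => ‖y i‖)
  rw [h, hφ] at h2
  calc _ ≤ (∑ i, ‖φ i‖ * ‖y i‖) ^ 2 := by gcongr
    _ ≤ _ := by linarith

theorem fid_cont {n : ℕ} (ψ φ : Fin (n+1) → ℂ) :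
    Continuous (fun U : Matrix.unitaryGroup (Fin (n+1)) ℂ =>
    ‖vecInner φ ((U : Matrix (Fin (n+1)) (Fin (n+1)) ℂ).mulVec ψ)‖ ^ 2) := by
  unfold vecInner
  have : Continuous fun q : Matrix.unitaryGroup (Fin (n+1)) ℂ =>
    (q : Matrix (Fin (n+1)) (Fin (n+1)) ℂ).mulVec ψ :=
    Continuous.matrix_mulVec continuous_subtype_val continuous_const
  fun_prop

theorem haar_cdf (n : ℕ) (hn : 1 ≤ n) (ψ φ : Fin (n+1) → ℂ) (hψ : ∑ i, ‖ψ i‖ ^ 2 = 1)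
    (hφ : ∑ i, ‖φ i‖ ^ 2 = 1)
    (μ : Measure (Matrix.unitaryGroup (Fin (n+1)) ℂ))
    [IsProbabilityMeasure μ] [μ.IsHaarMeasure] (t : ℝ) (ht : 0 ≤ t) (ht1 : t ≤ 1) :
    μ {U : Matrix.unitaryGroup (Fin (n+1)) ℂ |
          ‖vecInner φ ((U : Matrix (Fin (n+1)) (Fin (n+1)) ℂ).mulVec ψ)‖ ^ 2 ≤ t}
      = ENNReal.ofReal (1 - (1 - t) ^ n) := by
  rcases ht1.eq_or_lt with rfl | ht1
  · have : {U : Matrix.unitaryGroup (Fin (n+1)) ℂ |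
          ‖vecInner φ ((U : Matrix (Fin (n+1)) (Fin (n+1)) ℂ).mulVec ψ)‖ ^ 2 ≤ 1} = Set.univ :=
      Set.eq_univ_of_forall fun U => fid_le_one ψ φ hψ hφ U
    rw [this, measure_univ]
    simp [show n ≠ 0 by omega]
  · have hc : {U : Matrix.unitaryGroup (Fin (n+1)) ℂ |
          ‖vecInner φ ((U : Matrix (Fin (n+1)) (Fin (n+1)) ℂ).mulVec ψ)‖ ^ 2 ≤ t}
        = {U : Matrix.unitaryGroup (Fin (n+1)) ℂ |
          t < ‖vecInner φ ((U : Matrix (Fin (n+1)) (Fin (n+1)) ℂ).mulVec ψ)‖ ^ 2}ᶜ := by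
      ext U; simp
    rw [hc, prob_compl_eq_one_sub (measurableSet_lt measurable_const (fid_cont ψ φ).measurable),
      haar_tail n ψ φ hψ hφ μ t ht ht1, ENNReal.ofReal_sub _ (by have : 0 ≤ 1 - t := by linarith
                                                                 positivity), ENNReal.ofReal_one]

theorem density_Iic (n : ℕ) (t : ℝ) (ht : 0 ≤ t) (ht1 : t ≤ 1) :
    ∫⁻ f in Set.Iic t, ENNReal.ofReal (if 0 ≤ f ∧ f ≤ 1 then ((n : ℝ) + 1) * (1 - f) ^ n else 0)
      = ENNReal.ofReal (1 - (1 - t) ^ (n + 1)) := by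
  have h1 : ∫⁻ f in Set.Iic t, ENNReal.ofReal (if 0 ≤ f ∧ f ≤ 1 then ((n : ℝ) + 1) * (1 - f) ^ n else 0)
     = ∫⁻ f in Set.Icc 0 t, ENNReal.ofReal (((n : ℝ) + 1) * (1 - f) ^ n) := by
    rw [← lintegral_indicator measurableSet_Iic, ← lintegral_indicator measurableSet_Icc]
    refine lintegral_congr fun f => ?_
    by_cases h : 0 ≤ f <;> by_cases h' : f ≤ t
    · simp [Set.indicator, h, h', h'.trans ht1]
    · simp [Set.indicator, h, h']
    · simp [Set.indicator, h, h']
    · simp [Set.indicator, h, h']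
  rw [h1, ← ofReal_integral_eq_lintegral_ofReal]
  · congr 1
    rw [integral_Icc_eq_integral_Ioc, ← intervalIntegral.integral_of_le ht,
      intervalIntegral.integral_eq_sub_of_hasDerivAt (f := fun f => -(1 - f) ^ (n + 1))]
    · simp; ring
    · intro x _
      have := (((hasDerivAt_id x).const_sub 1).pow (n + 1)).neg
      refine HasDerivAt.congr_deriv this ?_
      simp
    · exact Continuous.intervalIntegrable (by fun_prop) _ _
  · exact Continuous.integrableOn_Icc (by fun_prop)
  · filter_upwards [ae_restrict_mem measurableSet_Icc] with x hx
    have : 0 ≤ 1 - x := by linarith [hx.2]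
    simp only [Pi.zero_apply]
    positivity

/-- For `d ≥ 2`, unit vectors `ψ, φ` in `ℂ^d` and a Haar-distributed
unitary `U`, the fidelity `|⟨φ, Uψ⟩|²` has CDF `t ↦ 1 - (1-t)^(d-1)` on `[0,1]`;
equivalently, its distribution has density `f ↦ (d-1)(1-f)^(d-2)` on `[0,1]` with respect
to Lebesgue measure. -/
theorem haar_fidelity_distribution (d : ℕ) (hd : 2 ≤ d)
    (ψ φ : Fin d → ℂ) (hψ : ∑ i : Fin d, ‖ψ i‖ ^ 2 = 1) (hφ : ∑ i : Fin d, ‖φ i‖ ^ 2 = 1)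
    (μ : Measure (Matrix.unitaryGroup (Fin d) ℂ))
    [IsProbabilityMeasure μ] [μ.IsHaarMeasure] :
    (∀ t ∈ Set.Icc (0 : ℝ) 1,
      μ {U : Matrix.unitaryGroup (Fin d) ℂ |
          ‖vecInner φ ((U : Matrix (Fin d) (Fin d) ℂ).mulVec ψ)‖ ^ 2 ≤ t}
        = ENNReal.ofReal (1 - (1 - t) ^ (d - 1))) ∧
    Measure.map (fun U : Matrix.unitaryGroup (Fin d) ℂ =>
        ‖vecInner φ ((U : Matrix (Fin d) (Fin d) ℂ).mulVec ψ)‖ ^ 2) μ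
      = volume.withDensity (fun f : ℝ =>
          ENNReal.ofReal (if 0 ≤ f ∧ f ≤ 1 then ((d : ℝ) - 1) * (1 - f) ^ (d - 2) else 0)) := by
  obtain ⟨n, rfl⟩ : ∃ n, d = n + 1 + 1 := ⟨d - 2, by omega⟩
  have hcdf := haar_cdf (n + 1) (by omega) ψ φ hψ hφ μ
  refine ⟨fun t ht => hcdf t ht.1 ht.2, ?_⟩
  have hm := (fid_cont ψ φ).measurable
  have := Measure.isProbabilityMeasure_map (μ := μ) hm.aemeasurable
  refine Measure.ext_of_Iic _ _ fun t => ?_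
  rw [Measure.map_apply hm measurableSet_Iic, withDensity_apply _ measurableSet_Iic]
  have hd1 : (((n + 1 + 1 : ℕ) : ℝ) - 1) = (n : ℝ) + 1 := by push_cast; ring
  have hd2 : n + 1 + 1 - 2 = n := by omega
  rw [hd1, hd2]
  rcases lt_or_ge t 0 with ht | ht
  · have h1 : (fun U : Matrix.unitaryGroup (Fin (n + 1 + 1)) ℂ =>
        ‖vecInner φ ((U : Matrix (Fin (n + 1 + 1)) (Fin (n + 1 + 1)) ℂ).mulVec ψ)‖ ^ 2) ⁻¹' Set.Iic t = ∅ := by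
      ext U
      simp only [Set.mem_preimage, Set.mem_Iic, Set.mem_empty_iff_false, iff_false, not_le]
      exact ht.trans_le (by positivity)
    rw [h1, measure_empty]
    symm
    rw [setLIntegral_congr_fun (g := fun _ => 0) measurableSet_Iic]
    · simp
    · intro x hx
      have : ¬ 0 ≤ x := not_le.2 (lt_of_le_of_lt hx ht)
      simp [this]
  · rcases le_or_gt t 1 with ht1 | ht1
    · rw [density_Iic n t ht ht1]
      exact hcdf t ht ht1
    · have h1 : (fun U : Matrix.unitaryGroup (Fin (n + 1 + 1)) ℂ =>
        ‖vecInner φ ((U : Matrix (Fin (n + 1 + 1)) (Fin (n + 1 + 1)) ℂ).mulVec ψ)‖ ^ 2) ⁻¹' Set.Iic t = Set.univ :=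
        Set.eq_univ_of_forall fun U => (fid_le_one ψ φ hψ hφ U).trans ht1.le
      rw [h1, measure_univ]
      have h2 := density_Iic n 1 zero_le_one le_rfl
      simp only [sub_self, ne_eq, Nat.add_eq_zero_iff, one_ne_zero, and_false, not_false_eq_true, zero_pow, sub_zero,
        ENNReal.ofReal_one] at h2
      rw [← h2, ← lintegral_indicator measurableSet_Iic, ← lintegral_indicator measurableSet_Iic]
      refine lintegral_congr fun f => ?_
      by_cases h : f ≤ 1
      · simp [Set.indicator, h, h.trans ht1.le]
      · simp [Set.indicator, h]
end
end

section
/- Let γ ∈ (0, 1], let s = (√((1+γ)/2), √((1−γ)/2)), let |I_s⟩ = s_1 e_0 ⊗ e_0 + s_2 e_1 ⊗ e_1 in ℂ² ⊗ ℂ², and let (U_a, U_b) be distributed according to the product Haar measure on U(2) × U(2). Then the fidelity |⟨e_0 ⊗ e_0, (U_a ⊗ U_b)I_s⟩|² has probability density (with respect to Lebesgue measure) equal almost everywhere to the function taking the value (1/γ)·ln((1+γ)/(1−γ)) for f ∈ [0, (1−γ)/2], the value (1/γ)·ln((1+γ)/(2f)) for f ∈ ((1−γ)/2, (1+γ)/2],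 and 0 for f ∈ ((1+γ)/2, 1]. -/
open MeasureTheory Matrix Finset
open scoped ComplexConjugate

noncomputable section

/-- The Kronecker-product action of a pair of `d × d` matrices on a bipartite vector in
`ℂ^d ⊗ ℂ^d`, identified with `Fin d × Fin d → ℂ`. -/
def kronAct {d : ℕ} (Ua Ub : Matrix (Fin d) (Fin d) ℂ) (ψ : Fin d × Fin d → ℂ) :
    Fin d × Fin d → ℂ :=
  fun p => ∑ q : Fin d × Fin d, Ua p.1 q.1 * Ub p.2 q.2 * ψ q

/-- The standard Hermitian inner product on `ℂ^d ⊗ ℂ^d`. -/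
def bipInner {d : ℕ} (x y : Fin d × Fin d → ℂ) : ℂ :=
  ∑ p : Fin d × Fin d, conj (x p) * y p

/-- The vector `|I_s⟩ = ∑ i, s i • (e i ⊗ e i)` with Schmidt coefficients `s`. -/
def schmidtVec {d : ℕ} (s : Fin d → ℝ) : Fin d × Fin d → ℂ :=
  fun p => if p.1 = p.2 then (s p.1 : ℂ) else 0

/-- The piecewise density of the fidelity of a Haar-random locally rotated two-qubit pure
state with Schmidt coefficients `(√((1+γ)/2), √((1-γ)/2))` with respect to a fixed product
state: `(1/γ)·ln((1+γ)/(1−γ))` on `[0,(1−γ)/2]`, `(1/γ)·ln((1+γ)/(2f))` on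
`((1−γ)/2,(1+γ)/2]`, and `0` elsewhere. -/
def fidDensity (γ : ℝ) : ℝ → ℝ := fun f =>
  if 0 ≤ f ∧ f ≤ (1 - γ) / 2 then (1 / γ) * Real.log ((1 + γ) / (1 - γ))
  else if (1 - γ) / 2 < f ∧ f ≤ (1 + γ) / 2 then (1 / γ) * Real.log ((1 + γ) / (2 * f))
  else 0

instance qf_compact : CompactSpace (Matrix.unitaryGroup (Fin 2) ℂ) := by
  have hc : IsClosed (Matrix.unitaryGroup (Fin 2) ℂ : Set (Matrix (Fin 2) (Fin 2) ℂ)) :=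
    isClosed_unitary
  refine (isCompact_iff_compactSpace
    (s := (Matrix.unitaryGroup (Fin 2) ℂ : Set (Matrix (Fin 2) (Fin 2) ℂ)))).1 ?_
  refine IsCompact.of_isClosed_subset
    (s := Set.univ.pi fun _ : Fin 2 => Set.univ.pi fun _ : Fin 2 => Metric.closedBall (0 : ℂ) 1)
    (isCompact_univ_pi fun _ => isCompact_univ_pi fun _ => isCompact_closedBall _ _) ?_ ?_
  · exact hc
  · intro U hU i _ j _
    simpa using entry_norm_bound_of_unitary hU i j

lemma qf_right (μ : Measure (Matrix.unitaryGroup (Fin 2) ℂ))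
    [IsProbabilityMeasure μ] [μ.IsHaarMeasure] (V : Matrix.unitaryGroup (Fin 2) ℂ) :
    μ.map (· * V) = μ := by
  have : IsProbabilityMeasure (μ.map (· * V)) :=
    Measure.isProbabilityMeasure_map (measurable_mul_const V).aemeasurable
  exact Measure.isHaarMeasure_eq_of_isProbabilityMeasure _ _

def qfE (j : Fin 2) (U : Matrix.unitaryGroup (Fin 2) ℂ) : ℂ :=
  (U : Matrix (Fin 2) (Fin 2) ℂ) 0 j

lemma qf_meas (j : Fin 2) : Measurable (qfE j) := by
  have : Continuous (qfE j) :=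
    continuous_subtype_val.matrix_elem 0 j
  exact this.measurable

lemma qf_row (U : Matrix.unitaryGroup (Fin 2) ℂ) :
    ‖qfE 0 U‖ ^ 2 + ‖qfE 1 U‖ ^ 2 = 1 := by
  have h0 : (U : Matrix (Fin 2) (Fin 2) ℂ) * star (U : Matrix (Fin 2) (Fin 2) ℂ) = 1 :=
    Matrix.mem_unitaryGroup_iff.1 U.2
  have h := congrFun (congrFun h0 0) 0
  simp only [Matrix.mul_apply, Fin.sum_univ_two, Matrix.star_apply, Matrix.one_apply_eq] at h
  have h2 := congrArg Complex.re h
  simp only [Complex.star_def, Complex.mul_conj, ← Complex.ofReal_add, Complex.ofReal_re,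
    Complex.one_re, Complex.normSq_eq_norm_sq] at h2
  exact h2

lemma qf_V (a b : ℂ) (h : ‖a‖ ^ 2 + ‖b‖ ^ 2 = 1) :
    !![a, -conj b; b, conj a] ∈ Matrix.unitaryGroup (Fin 2) ℂ := by
  have h1 : a * conj a + b * conj b = 1 := by
    rw [Complex.mul_conj, Complex.mul_conj, Complex.normSq_eq_norm_sq, Complex.normSq_eq_norm_sq]
    exact_mod_cast h
  rw [Matrix.mem_unitaryGroup_iff']
  ext i j
  fin_cases i <;> fin_cases j <;> simp [Matrix.mul_apply, Fin.sum_univ_two] <;>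
    first | linear_combination h1 | ring

lemma qf_law (μ : Measure (Matrix.unitaryGroup (Fin 2) ℂ))
    [IsProbabilityMeasure μ] [μ.IsHaarMeasure] (a b : ℂ) (h : ‖a‖ ^ 2 + ‖b‖ ^ 2 = 1) :
    μ.map (fun U => ‖qfE 0 U * a + qfE 1 U * b‖ ^ 2) =
    μ.map (fun U => ‖qfE 0 U‖ ^ 2) := by
  conv_rhs => rw [← qf_right μ ⟨_, qf_V a b h⟩]
  rw [Measure.map_map ((qf_meas 0).norm.pow_const 2) (measurable_mul_const _)]
  congr 1
  ext U
  simp [qfE, Matrix.mul_apply, Fin.sum_univ_two]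

lemma qf_polar (g : ℝ → ENNReal) (hg : Measurable g) :
    ∫⁻ z : ℂ, g (‖z‖ ^ 2) = ENNReal.ofReal Real.pi * ∫⁻ t in Set.Ioi (0 : ℝ), g t := by
  have h1 := lintegral_image_eq_lintegral_abs_deriv_mul (s := Set.Ioi (0 : ℝ))
    (f := fun r => r ^ 2) (f' := fun r => 2 * r) measurableSet_Ioi
    (fun x _ => by simpa using (hasDerivAt_pow 2 x).hasDerivWithinAt)
    (fun x hx y hy hxy => (sq_eq_sq₀ (le_of_lt hx) (le_of_lt hy)).1 hxy) g
  have h2 : (fun r : ℝ => r ^ 2) '' Set.Ioi (0 : ℝ) = Set.Ioi 0 := by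
    ext x
    constructor
    · rintro ⟨y, hy, rfl⟩
      have hy' : (0 : ℝ) < y := hy
      exact pow_pos hy' 2
    · intro hx
      exact ⟨√x, Real.sqrt_pos.2 hx, Real.sq_sqrt (le_of_lt hx)⟩
  rw [h2] at h1
  rw [h1, ← Complex.lintegral_comp_polarCoord_symm, polarCoord_target, Measure.volume_eq_prod,
    ← Measure.prod_restrict]
  simp only [Complex.norm_polarCoord_symm, sq_abs, smul_eq_mul]
  rw [lintegral_prod _ (by fun_prop), ← lintegral_const_mul _ (by fun_prop)]
  refine setLIntegral_congr_fun measurableSet_Ioi fun x hx => ?_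
  have hx' : (0 : ℝ) < x := hx
  simp only [lintegral_const, Measure.restrict_apply MeasurableSet.univ, Set.univ_inter,
    Real.volume_Ioo]
  rw [abs_of_pos (by linarith), mul_right_comm, ← mul_assoc,
    ← ENNReal.ofReal_mul hx'.le, ← ENNReal.ofReal_mul Real.pi_pos.le]
  congr 2
  ring

lemma qf_exp (c r : ℝ) (hc : 0 < c) :
    ∫⁻ t in Set.Ioi r, ENNReal.ofReal (Real.exp (-(c * t))) =
      ENNReal.ofReal (Real.exp (-(c * r)) / c) := by
  rw [← ofReal_integral_eq_lintegral_ofReal]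
  · congr 1
    have := integral_exp_mul_Ioi (a := -c) (by linarith) r
    simp only [neg_mul] at this
    rw [this]; field_simp
  · have := integrableOn_exp_mul_Ioi (a := -c) (by linarith) r
    simp only [neg_mul] at this
    exact this
  · exact Filter.Eventually.of_forall fun _ => (Real.exp_pos _).le

def qfG (x : ℂ × ℂ) : ENNReal :=
  ENNReal.ofReal (Real.exp (-(1 * ‖x.2‖ ^ 2))) * ENNReal.ofReal (Real.exp (-(1 * ‖x.1‖ ^ 2)))

lemma qfG_meas : Measurable qfG := by unfold qfG; fun_prop

def qfc : ENNReal := ENNReal.ofReal Real.pi * ENNReal.ofReal Real.pi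

lemma qf_gauss (c r : ℝ) (hc : 0 < c) (hr : 0 ≤ r) :
    ∫⁻ z : ℂ, {z : ℂ | r < ‖z‖ ^ 2}.indicator
      (fun z => ENNReal.ofReal (Real.exp (-(c * ‖z‖ ^ 2)))) z =
      ENNReal.ofReal Real.pi * ENNReal.ofReal (Real.exp (-(c * r)) / c) := by
  have h := qf_polar ((Set.Ioi r).indicator fun t => ENNReal.ofReal (Real.exp (-(c * t))))
    (Measurable.indicator (by fun_prop) measurableSet_Ioi)
  rw [lintegral_indicator measurableSet_Ioi, Measure.restrict_restrict measurableSet_Ioi,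
    Set.inter_eq_left.2 (Set.Ioi_subset_Ioi hr), qf_exp c r hc] at h
  exact h

lemma qf_gauss' (c : ℝ) (hc : 0 < c) :
    ∫⁻ z : ℂ, ENNReal.ofReal (Real.exp (-(c * ‖z‖ ^ 2))) =
      ENNReal.ofReal Real.pi * ENNReal.ofReal (1 / c) := by
  have h := qf_polar (fun t => ENNReal.ofReal (Real.exp (-(c * t)))) (by fun_prop)
  rw [qf_exp c 0 hc] at h
  simpa using h

lemma qf_total : ∫⁻ x, qfG x = qfc := by
  unfold qfG qfc
  rw [Measure.volume_eq_prod, lintegral_prod_symm _ (by fun_prop)]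
  simp only
  simp_rw [lintegral_const_mul' _ _ ENNReal.ofReal_ne_top]
  rw [qf_gauss' 1 one_pos, lintegral_mul_const _ (by fun_prop), qf_gauss' 1 one_pos]
  simp

lemma qf_core (u : ℝ) (h0 : 0 ≤ u) (h1 : u < 1) :
    ∫⁻ x, {x : ℂ × ℂ | u * (‖x.1‖ ^ 2 + ‖x.2‖ ^ 2) < ‖x.1‖ ^ 2}.indicator qfG x =
      qfc * ENNReal.ofReal (1 - u) := by
  have hu : 0 < 1 - u := by linarith
  have hm : MeasurableSet {x : ℂ × ℂ | u * (‖x.1‖ ^ 2 + ‖x.2‖ ^ 2) < ‖x.1‖ ^ 2} :=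
    measurableSet_lt (by fun_prop) (by fun_prop)
  rw [Measure.volume_eq_prod, lintegral_prod_symm _ (qfG_meas.indicator hm).aemeasurable]
  have key : ∀ y : ℂ, ∫⁻ x : ℂ,
      {x : ℂ × ℂ | u * (‖x.1‖ ^ 2 + ‖x.2‖ ^ 2) < ‖x.1‖ ^ 2}.indicator qfG (x, y) =
      ENNReal.ofReal Real.pi * ENNReal.ofReal (Real.exp (-(1 / (1 - u) * ‖y‖ ^ 2))) := by
    intro y
    have e : ∀ x : ℂ,
      {x : ℂ × ℂ | u * (‖x.1‖ ^ 2 + ‖x.2‖ ^ 2) < ‖x.1‖ ^ 2}.indicator qfG (x, y) =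
      ENNReal.ofReal (Real.exp (-(1 * ‖y‖ ^ 2))) *
      {z : ℂ | u / (1 - u) * ‖y‖ ^ 2 < ‖z‖ ^ 2}.indicator
      (fun z => ENNReal.ofReal (Real.exp (-(1 * ‖z‖ ^ 2)))) x := by
      intro x
      have : (x, y) ∈ {x : ℂ × ℂ | u * (‖x.1‖ ^ 2 + ‖x.2‖ ^ 2) < ‖x.1‖ ^ 2} ↔
          x ∈ {z : ℂ | u / (1 - u) * ‖y‖ ^ 2 < ‖z‖ ^ 2} := by
        simp only [Set.mem_ofPred_eq]
        rw [div_mul_eq_mul_div, div_lt_iff₀ hu]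
        constructor <;> intro h <;> linarith
      by_cases hx : x ∈ {z : ℂ | u / (1 - u) * ‖y‖ ^ 2 < ‖z‖ ^ 2}
      · rw [Set.indicator_of_mem hx, Set.indicator_of_mem (this.2 hx)]; rfl
      · rw [Set.indicator_of_notMem hx, Set.indicator_of_notMem (fun h => hx (this.1 h)), mul_zero]
    simp_rw [e]
    rw [lintegral_const_mul' _ _ ENNReal.ofReal_ne_top, qf_gauss 1 _ one_pos (by positivity),
      mul_left_comm, ← ENNReal.ofReal_mul (Real.exp_pos _).le, div_one, ← Real.exp_add]
    congr 3
    field_simp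
    ring
  simp_rw [key]
  rw [lintegral_const_mul' _ _ ENNReal.ofReal_ne_top, qf_gauss' _ (by positivity), qfc,
    mul_assoc, one_div_one_div]

lemma qf_normid (a b x y : ℂ) (h : ‖a‖ ^ 2 + ‖b‖ ^ 2 = 1) :
    ‖a * x + b * y‖ ^ 2 + ‖-conj b * x + conj a * y‖ ^ 2 = ‖x‖ ^ 2 + ‖y‖ ^ 2 := by
  have e : ‖a * x + b * y‖ ^ 2 + ‖-conj b * x + conj a * y‖ ^ 2 =
      (‖a‖ ^ 2 + ‖b‖ ^ 2) * (‖x‖ ^ 2 + ‖y‖ ^ 2) := by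
    simp only [Complex.sq_norm, Complex.normSq_apply, Complex.add_re, Complex.add_im,
      Complex.mul_re, Complex.mul_im, Complex.neg_re, Complex.neg_im, Complex.conj_re,
      Complex.conj_im]
    ring
  rw [e, h, one_mul]

def qfRot (a b : ℂ) (h : ‖a‖ ^ 2 + ‖b‖ ^ 2 = 1) :
    WithLp 2 (ℂ × ℂ) →ₗᵢ[ℝ] WithLp 2 (ℂ × ℂ) where
  toFun x := WithLp.toLp 2 (a * x.fst + b * x.snd, -conj b * x.fst + conj a * x.snd)
  map_add' x y := by
    rw [← WithLp.toLp_add]; congr 1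
    ext1 <;> simp <;> ring
  map_smul' c x := by
    rw [RingHom.id_apply, ← WithLp.toLp_smul]; congr 1
    ext1 <;> simp <;> ring
  norm_map' x := by
    rw [WithLp.prod_norm_eq_of_L2, WithLp.prod_norm_eq_of_L2]
    congr 1
    exact qf_normid a b _ _ h

lemma qf_rot (a b : ℂ) (h : ‖a‖ ^ 2 + ‖b‖ ^ 2 = 1) :
    MeasurePreserving (fun x : ℂ × ℂ => (a * x.1 + b * x.2, -conj b * x.1 + conj a * x.2)) := by
  have h1 := ((qfRot a b h).toLinearIsometryEquiv rfl).measurePreserving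
  exact ((WithLp.volume_preserving_ofLp ℂ ℂ).comp h1).comp (WithLp.volume_preserving_toLp ℂ ℂ)

lemma qf_core' (a b : ℂ) (h : ‖a‖ ^ 2 + ‖b‖ ^ 2 = 1) (u : ℝ) (h0 : 0 ≤ u) (h1 : u < 1) :
    ∫⁻ x, {x : ℂ × ℂ | u * (‖x.1‖ ^ 2 + ‖x.2‖ ^ 2) < ‖a * x.1 + b * x.2‖ ^ 2}.indicator qfG x =
      qfc * ENNReal.ofReal (1 - u) := by
  have hm : MeasurableSet {x : ℂ × ℂ | u * (‖x.1‖ ^ 2 + ‖x.2‖ ^ 2) < ‖x.1‖ ^ 2} :=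
    measurableSet_lt (by fun_prop) (by fun_prop)
  rw [← qf_core u h0 h1, ← (qf_rot a b h).lintegral_comp (qfG_meas.indicator hm)]
  congr 1
  ext x
  have hn := qf_normid a b x.1 x.2 h
  have hG : qfG (a * x.1 + b * x.2, -conj b * x.1 + conj a * x.2) = qfG x := by
    simp only [qfG]
    rw [← ENNReal.ofReal_mul (Real.exp_pos _).le, ← ENNReal.ofReal_mul (Real.exp_pos _).le,
      ← Real.exp_add, ← Real.exp_add]
    congr 2
    linarith
  simp only [Set.indicator, Set.mem_ofPred_eq, hn, hG]

lemma qf_tail (μ : Measure (Matrix.unitaryGroup (Fin 2) ℂ))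
    [IsProbabilityMeasure μ] [μ.IsHaarMeasure] (u : ℝ) (h0 : 0 ≤ u) (h1 : u < 1) :
    μ.map (fun U => ‖qfE 0 U‖ ^ 2) (Set.Ioi u) = ENNReal.ofReal (1 - u) := by
  set S : Set (Matrix.unitaryGroup (Fin 2) ℂ × (ℂ × ℂ)) :=
    {p | u * (‖p.2.1‖ ^ 2 + ‖p.2.2‖ ^ 2) < ‖qfE 0 p.1 * p.2.1 + qfE 1 p.1 * p.2.2‖ ^ 2} with hS
  have m0 := qf_meas 0
  have m1 := qf_meas 1
  have hSm : MeasurableSet S := measurableSet_lt (by fun_prop) (by fun_prop)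
  have hm : Measurable (S.indicator fun p => qfG p.2) :=
    (qfG_meas.comp measurable_snd).indicator hSm
  have hsw := lintegral_lintegral_swap (μ := μ) (ν := (volume : Measure (ℂ × ℂ)))
    (f := fun U x => S.indicator (fun p => qfG p.2) (U, x)) hm.aemeasurable
  have hL : ∀ U, ∫⁻ x : ℂ × ℂ, S.indicator (fun p => qfG p.2) (U, x) =
      qfc * ENNReal.ofReal (1 - u) := fun U => by
    rw [← qf_core' _ _ (qf_row U) u h0 h1]; rfl
  have hR : ∀ x : ℂ × ℂ, x ≠ 0 → ∫⁻ U, S.indicator (fun p => qfG p.2) (U, x) ∂μ =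
      qfG x * μ.map (fun U => ‖qfE 0 U‖ ^ 2) (Set.Ioi u) := by
    intro x hx
    set n : ℝ := ‖x.1‖ ^ 2 + ‖x.2‖ ^ 2 with hn
    have hnpos : 0 < n := by
      by_contra hc
      have a1 : ‖x.1‖ ^ 2 = 0 := by nlinarith [sq_nonneg ‖x.1‖, sq_nonneg ‖x.2‖]
      have a2 : ‖x.2‖ ^ 2 = 0 := by nlinarith [sq_nonneg ‖x.1‖, sq_nonneg ‖x.2‖]
      apply hx
      ext1
      · simpa using a1
      · simpa using a2
    have hsn : (√n) ^ 2 = n := Real.sq_sqrt hnpos.le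
    have hunit : ‖x.1 / (√n : ℂ)‖ ^ 2 + ‖x.2 / (√n : ℂ)‖ ^ 2 = 1 := by
      rw [norm_div, norm_div, div_pow, div_pow, Complex.norm_real, Real.norm_eq_abs, sq_abs, hsn,
        ← add_div, ← hn, div_self hnpos.ne']
    rw [← qf_law μ _ _ hunit, Measure.map_apply (by fun_prop) measurableSet_Ioi]
    have e : ∀ U, S.indicator (fun p => qfG p.2) (U, x) =
      ((fun U => ‖qfE 0 U * (x.1 / (√n : ℂ)) + qfE 1 U * (x.2 / (√n : ℂ))‖ ^ 2) ⁻¹'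
        Set.Ioi u).indicator (fun _ => qfG x) U := by
      intro U
      have e1 : ‖qfE 0 U * (x.1 / (√n : ℂ)) + qfE 1 U * (x.2 / (√n : ℂ))‖ ^ 2 =
          ‖qfE 0 U * x.1 + qfE 1 U * x.2‖ ^ 2 / n := by
        rw [← mul_div_assoc, ← mul_div_assoc, ← add_div, norm_div, div_pow, Complex.norm_real,
          Real.norm_eq_abs, sq_abs, hsn]
      simp only [Set.indicator, Set.mem_preimage, Set.mem_Ioi, e1, lt_div_iff₀ hnpos, hS,
        Set.mem_ofPred_eq]
      rfl
    simp_rw [e]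
    rw [lintegral_indicator_const]
    exact (by fun_prop : Measurable (fun U => ‖qfE 0 U * (x.1 / (√n : ℂ)) +
      qfE 1 U * (x.2 / (√n : ℂ))‖ ^ 2)) measurableSet_Ioi
  have hR' : ∫⁻ x : ℂ × ℂ, ∫⁻ U, S.indicator (fun p => qfG p.2) (U, x) ∂μ =
      qfc * μ.map (fun U => ‖qfE 0 U‖ ^ 2) (Set.Ioi u) := by
    rw [← qf_total, ← lintegral_mul_const _ qfG_meas]
    apply lintegral_congr_ae
    have : ∀ᵐ x : ℂ × ℂ, x ≠ 0 := by
      rw [ae_iff, Measure.volume_eq_prod]; simp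
    filter_upwards [this] with x hx using hR x hx
  rw [hR'] at hsw
  simp_rw [hL] at hsw
  rw [lintegral_const, measure_univ, mul_one] at hsw
  have hc0 : qfc ≠ 0 := by
    unfold qfc; simp [Real.pi_pos]
  have hct : qfc ≠ ⊤ := ENNReal.mul_ne_top ENNReal.ofReal_ne_top ENNReal.ofReal_ne_top
  exact ((ENNReal.mul_right_inj hc0 hct).1 hsw).symm

lemma qf_unif (μ : Measure (Matrix.unitaryGroup (Fin 2) ℂ))
    [IsProbabilityMeasure μ] [μ.IsHaarMeasure] :
    μ.map (fun U => ‖qfE 0 U‖ ^ 2) = volume.restrict (Set.Ioo (0 : ℝ) 1) := by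
  have m0 := qf_meas 0
  have hf : Measurable (fun U => ‖qfE 0 U‖ ^ 2) := by fun_prop
  have i1 : IsProbabilityMeasure (μ.map (fun U => ‖qfE 0 U‖ ^ 2)) :=
    Measure.isProbabilityMeasure_map hf.aemeasurable
  have i2 : IsProbabilityMeasure (volume.restrict (Set.Ioo (0 : ℝ) 1)) := ⟨by simp⟩
  refine Measure.ext_of_Iic _ _ fun u => ?_
  rw [← Set.compl_Ioi, prob_compl_eq_one_sub measurableSet_Ioi,
    prob_compl_eq_one_sub measurableSet_Ioi]
  congr 1
  rw [Measure.restrict_apply measurableSet_Ioi]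
  rcases lt_or_ge u 0 with h | h0
  · have e1 : Set.Ioi u ∩ Set.Ioo (0 : ℝ) 1 = Set.Ioo 0 1 :=
      Set.inter_eq_right.2 fun x hx => h.trans hx.1
    rw [e1, Measure.map_apply hf measurableSet_Ioi]
    have e2 : (fun U => ‖qfE 0 U‖ ^ 2) ⁻¹' Set.Ioi u = Set.univ := by
      ext U
      simpa using lt_of_lt_of_le h (by positivity)
    rw [e2]; simp
  rcases lt_or_ge u 1 with h1 | h1
  · rw [qf_tail μ u h0 h1]
    have e1 : Set.Ioi u ∩ Set.Ioo (0 : ℝ) 1 = Set.Ioo u 1 := by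
      ext x
      simp only [Set.mem_inter_iff, Set.mem_Ioi, Set.mem_Ioo]
      constructor
      · rintro ⟨h, _, h'⟩; exact ⟨h, h'⟩
      · rintro ⟨h, h'⟩; exact ⟨h, by linarith, h'⟩
    rw [e1, Real.volume_Ioo]
  · have e1 : Set.Ioi u ∩ Set.Ioo (0 : ℝ) 1 = ∅ := by
      ext x
      simp only [Set.mem_inter_iff, Set.mem_Ioi, Set.mem_Ioo, Set.mem_empty_iff_false, iff_false]
      rintro ⟨h, _, h'⟩; linarith
    rw [e1, Measure.map_apply hf measurableSet_Ioi]
    have e2 : (fun U => ‖qfE 0 U‖ ^ 2) ⁻¹' Set.Ioi u = ∅ := by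
      ext U
      simp only [Set.mem_preimage, Set.mem_Ioi, Set.mem_empty_iff_false, iff_false, not_lt]
      have := qf_row U
      nlinarith [sq_nonneg ‖qfE 1 U‖]
    rw [e2]; simp

lemma qf_scaled (μ : Measure (Matrix.unitaryGroup (Fin 2) ℂ))
    [IsProbabilityMeasure μ] [μ.IsHaarMeasure] (a b : ℂ) (n : ℝ) (hn : n = ‖a‖ ^ 2 + ‖b‖ ^ 2)
    (hnpos : 0 < n) (A : Set ℝ) (hA : MeasurableSet A) :
    μ {U | ‖qfE 0 U * a + qfE 1 U * b‖ ^ 2 ∈ A} =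
      ENNReal.ofReal n⁻¹ * volume (A ∩ Set.Ioo 0 n) := by
  have m0 := qf_meas 0
  have m1 := qf_meas 1
  have hsn : (√n) ^ 2 = n := Real.sq_sqrt hnpos.le
  have hunit : ‖a / (√n : ℂ)‖ ^ 2 + ‖b / (√n : ℂ)‖ ^ 2 = 1 := by
    rw [norm_div, norm_div, div_pow, div_pow, Complex.norm_real, Real.norm_eq_abs, sq_abs, hsn,
      ← add_div, ← hn, div_self hnpos.ne']
  have hl := (qf_law μ _ _ hunit).trans (qf_unif μ)
  have hB : MeasurableSet ((fun t => n * t) ⁻¹' A) := (measurable_const_mul n) hA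
  have h2 := congrArg (fun ν : Measure ℝ => ν ((fun t => n * t) ⁻¹' A)) hl
  rw [Measure.map_apply (by fun_prop) hB, Measure.restrict_apply hB] at h2
  have e3 : (fun t => n * t) ⁻¹' A ∩ Set.Ioo (0 : ℝ) 1 =
      (fun t => n * t) ⁻¹' (A ∩ Set.Ioo 0 n) := by
    ext t
    simp only [Set.mem_inter_iff, Set.mem_preimage, Set.mem_Ioo]
    rw [mul_pos_iff_of_pos_left hnpos, mul_lt_iff_lt_one_right hnpos]
  rw [e3, Real.volume_preimage_mul_left hnpos.ne', abs_of_pos (inv_pos.2 hnpos)] at h2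
  rw [← h2]
  congr 1
  ext U
  have e1 : ‖qfE 0 U * (a / (√n : ℂ)) + qfE 1 U * (b / (√n : ℂ))‖ ^ 2 =
      ‖qfE 0 U * a + qfE 1 U * b‖ ^ 2 / n := by
    rw [← mul_div_assoc, ← mul_div_assoc, ← add_div, norm_div, div_pow, Complex.norm_real,
      Real.norm_eq_abs, sq_abs, hsn]
  simp only [Set.mem_ofPred_eq, Set.mem_preimage, e1, mul_div_cancel₀ _ hnpos.ne']

lemma qf_log (lo γ m : ℝ) (hγ : 0 < γ) (hm : m ≤ 1) (hp : 0 < lo + γ * m) :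
    ∫⁻ s in Set.Ioo m 1, ENNReal.ofReal (lo + γ * s)⁻¹ =
      ENNReal.ofReal (1 / γ * (Real.log (lo + γ) - Real.log (lo + γ * m))) := by
  have hpos : ∀ s ∈ Set.Icc m 1, 0 < lo + γ * s := fun s hs => by
    nlinarith [mul_le_mul_of_nonneg_left hs.1 hγ.le]
  have hd : ∀ s ∈ Set.uIcc m 1,
      HasDerivAt (fun s => 1 / γ * Real.log (lo + γ * s)) ((lo + γ * s)⁻¹) s := by
    intro s hs
    rw [Set.uIcc_of_le hm] at hs
    have h1 : HasDerivAt (fun s => lo + γ * s) γ s := by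
      simpa using ((hasDerivAt_id s).const_mul γ).const_add lo
    have h2 := (h1.log (hpos s hs).ne').const_mul (1 / γ)
    have e : 1 / γ * (γ / (lo + γ * s)) = (lo + γ * s)⁻¹ := by
      have := (hpos s hs).ne'
      field_simp
    rw [e] at h2
    exact h2
  have hc : ContinuousOn (fun s => (lo + γ * s)⁻¹) (Set.uIcc m 1) := by
    rw [Set.uIcc_of_le hm]
    exact ContinuousOn.inv₀ (by fun_prop) fun s hs => (hpos s hs).ne'
  have hi := hc.intervalIntegrable (μ := volume)
  have h := intervalIntegral.integral_eq_sub_of_hasDerivAt hd hi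
  rw [intervalIntegral.integral_of_le hm, integral_Ioc_eq_integral_Ioo] at h
  rw [← ofReal_integral_eq_lintegral_ofReal, h]
  · congr 1; ring_nf
  · exact ((intervalIntegrable_iff_integrableOn_Ioo_of_le hm).1 hi)
  · refine (ae_restrict_iff' measurableSet_Ioo).2 (Filter.Eventually.of_forall fun s hs => ?_)
    exact inv_nonneg.2 (hpos s ⟨hs.1.le, hs.2.le⟩).le

def qfK (γ : ℝ) (s f : ℝ) : ENNReal :=
  {p : ℝ × ℝ | 0 < p.2 ∧ p.2 < (1 - γ) / 2 + γ * p.1}.indicator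
    (fun p => ENNReal.ofReal ((1 - γ) / 2 + γ * p.1)⁻¹) (s, f)

lemma qfK_meas (γ : ℝ) : Measurable (Function.uncurry (qfK γ)) := by
  have hm : MeasurableSet {p : ℝ × ℝ | 0 < p.2 ∧ p.2 < (1 - γ) / 2 + γ * p.1} :=
    MeasurableSet.inter (s₁ := {p : ℝ × ℝ | 0 < p.2})
      (s₂ := {p : ℝ × ℝ | p.2 < (1 - γ) / 2 + γ * p.1})
      (measurableSet_lt (by fun_prop) (by fun_prop))
      (measurableSet_lt (by fun_prop) (by fun_prop))
  exact Measurable.indicator (by fun_prop) hm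

lemma qf_density (γ : ℝ) (hγ : γ ∈ Set.Ioc (0 : ℝ) 1) (f : ℝ) (hf : f ≠ 0) :
    ∫⁻ s in Set.Ioo (0 : ℝ) 1, qfK γ s f = ENNReal.ofReal (fidDensity γ f) := by
  obtain ⟨h0, h1⟩ := hγ
  rcases lt_or_gt_of_ne hf with hneg | hpos
  · have e : ∀ s, qfK γ s f = 0 := fun s =>
      Set.indicator_of_notMem (fun h => absurd h.1 (not_lt.2 hneg.le)) _
    simp only [e, lintegral_zero]
    rw [fidDensity, if_neg (fun h => absurd h.1 (not_le.2 hneg)),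
      if_neg (fun h => by linarith [h.1])]
    simp
  set m : ℝ := max 0 ((f - (1 - γ) / 2) / γ) with hm
  have hm0 : 0 ≤ m := le_max_left _ _
  have e1 : ∫⁻ s in Set.Ioo (0 : ℝ) 1, qfK γ s f =
      ∫⁻ s in Set.Ioo m 1, ENNReal.ofReal ((1 - γ) / 2 + γ * s)⁻¹ := by
    rw [← lintegral_indicator measurableSet_Ioo, ← lintegral_indicator measurableSet_Ioo]
    congr 1
    ext s
    have hiff : m < s ↔ 0 < s ∧ f < (1 - γ) / 2 + γ * s := by
      rw [hm, max_lt_iff, div_lt_iff₀ h0]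
      constructor <;> rintro ⟨a, b⟩ <;> exact ⟨a, by linarith⟩
    simp only [Set.indicator, qfK, Set.mem_Ioo, Set.mem_ofPred_eq, hiff, hpos, true_and]
    split_ifs <;> first | rfl | (exfalso; tauto)
  rw [e1]
  rcases le_or_gt ((1 + γ) / 2) f with hhi | hhi
  · have hm1 : 1 ≤ m := by
      refine le_max_of_le_right ?_
      rw [le_div_iff₀ h0]; linarith
    rw [Set.Ioo_eq_empty (not_lt.2 hm1)]
    simp only [Measure.restrict_empty, lintegral_zero_measure]
    rw [fidDensity, if_neg (fun h => by linarith [h.2])]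
    split_ifs with h
    · have : f = (1 + γ) / 2 := le_antisymm h.2 hhi
      rw [this, mul_div_cancel₀ _ two_ne_zero, div_self (by linarith)]
      simp
    · simp
  · have hval : (1 - γ) / 2 + γ * m = max ((1 - γ) / 2) f := by
      rw [hm, mul_max_of_nonneg _ _ h0.le, mul_div_cancel₀ _ h0.ne', ← max_add_add_left]
      simp
    have hm1 : m ≤ 1 := by
      refine max_le zero_le_one ?_
      rw [div_le_iff₀ h0]; linarith
    rw [qf_log _ _ _ h0 hm1 (by rw [hval]; exact lt_max_of_lt_right hpos), hval, fidDensity]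
    congr 1
    have e2 : (1 - γ) / 2 + γ = (1 + γ) / 2 := by ring
    rcases le_or_gt f ((1 - γ) / 2) with hlo | hlo
    · rw [if_pos ⟨hpos.le, hlo⟩, max_eq_left hlo, e2,
        ← Real.log_div (by linarith) (by linarith)]
      congr 2
      field_simp
    · rw [if_neg (fun h => by linarith [h.2]), if_pos ⟨hlo, hhi.le⟩, max_eq_right hlo.le, e2,
        ← Real.log_div (by linarith) (by linarith)]
      congr 2
      field_simp

lemma qf_fid (x y : ℝ) (U V : Matrix.unitaryGroup (Fin 2) ℂ) :
    bipInner (fun p : Fin 2 × Fin 2 => if p = (0, 0) then (1 : ℂ) else 0)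
          (kronAct (U : Matrix (Fin 2) (Fin 2) ℂ) (V : Matrix (Fin 2) (Fin 2) ℂ)
            (schmidtVec ![x, y])) =
    qfE 0 V * (qfE 0 U * x) + qfE 1 V * (qfE 1 U * y) := by
  simp [bipInner, kronAct, schmidtVec, Fintype.sum_prod_type, Fin.sum_univ_two, qfE]
  ring

/-- For `γ ∈ (0,1]`, the fidelity `|⟨e₀ ⊗ e₀, (U_a ⊗ U_b) I_s⟩|²` of a
Haar-random locally rotated two-qubit state with Schmidt coefficients
`(√((1+γ)/2), √((1-γ)/2))` with respect to the product state `e₀ ⊗ e₀` has probability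
density `fidDensity γ` with respect to Lebesgue measure. -/
theorem qubit_fidelity_density (γ : ℝ) (hγ : γ ∈ Set.Ioc (0 : ℝ) 1)
    (μ : Measure (Matrix.unitaryGroup (Fin 2) ℂ))
    [IsProbabilityMeasure μ] [μ.IsHaarMeasure] :
    Measure.map (fun UV : Matrix.unitaryGroup (Fin 2) ℂ × Matrix.unitaryGroup (Fin 2) ℂ =>
        ‖bipInner (fun p : Fin 2 × Fin 2 => if p = (0, 0) then (1 : ℂ) else 0)
          (kronAct (UV.1 : Matrix (Fin 2) (Fin 2) ℂ) (UV.2 : Matrix (Fin 2) (Fin 2) ℂ)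
            (schmidtVec ![Real.sqrt ((1 + γ) / 2), Real.sqrt ((1 - γ) / 2)]))‖ ^ 2)
        (μ.prod μ)
      = volume.withDensity (fun f : ℝ => ENNReal.ofReal (fidDensity γ f)) := by
  
  simp only [qf_fid]
  obtain ⟨h0, h1⟩ := hγ
  have m0 := qf_meas 0
  have m1 := qf_meas 1
  ext A hA
  have hF : Measurable (fun UV : Matrix.unitaryGroup (Fin 2) ℂ × Matrix.unitaryGroup (Fin 2) ℂ =>
      ‖qfE 0 UV.2 * (qfE 0 UV.1 * (√((1 + γ) / 2) : ℂ)) +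
        qfE 1 UV.2 * (qfE 1 UV.1 * (√((1 - γ) / 2) : ℂ))‖ ^ 2) := by fun_prop
  rw [Measure.map_apply hF hA, Measure.prod_apply (hF hA), withDensity_apply _ hA]
  have hT : Measurable (fun U => ‖qfE 0 U‖ ^ 2) := by fun_prop
  have hK := qfK_meas γ
  have hae : ∀ᵐ U ∂μ, 0 < ‖qfE 0 U‖ ^ 2 := by
    refine ae_of_ae_map hT.aemeasurable (p := fun t => 0 < t) ?_
    rw [qf_unif μ]
    filter_upwards [ae_restrict_mem measurableSet_Ioo] with s hs using hs.1
  have step : ∀ᵐ U ∂μ, μ (Prod.mk U ⁻¹' ((fun UV : Matrix.unitaryGroup (Fin 2) ℂ ×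
      Matrix.unitaryGroup (Fin 2) ℂ =>
      ‖qfE 0 UV.2 * (qfE 0 UV.1 * (√((1 + γ) / 2) : ℂ)) +
        qfE 1 UV.2 * (qfE 1 UV.1 * (√((1 - γ) / 2) : ℂ))‖ ^ 2) ⁻¹' A)) =
      ∫⁻ f in A, qfK γ (‖qfE 0 U‖ ^ 2) f := by
    filter_upwards [hae] with U hU
    have hn : (1 - γ) / 2 + γ * ‖qfE 0 U‖ ^ 2 =
        ‖qfE 0 U * (√((1 + γ) / 2) : ℂ)‖ ^ 2 + ‖qfE 1 U * (√((1 - γ) / 2) : ℂ)‖ ^ 2 := by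
      rw [norm_mul, norm_mul, mul_pow, mul_pow, Complex.norm_real, Complex.norm_real,
        Real.norm_eq_abs, Real.norm_eq_abs, sq_abs, sq_abs, Real.sq_sqrt (by linarith),
        Real.sq_sqrt (by linarith)]
      linear_combination (-(1 - γ) / 2) * qf_row U
    have hp : 0 < (1 - γ) / 2 + γ * ‖qfE 0 U‖ ^ 2 := by
      have := mul_pos h0 hU
      linarith
    refine (qf_scaled μ _ _ _ hn hp A hA).trans ?_
    have e : ∀ f, qfK γ (‖qfE 0 U‖ ^ 2) f = (Set.Ioo 0 ((1 - γ) / 2 + γ * ‖qfE 0 U‖ ^ 2)).indicator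
        (fun _ => ENNReal.ofReal ((1 - γ) / 2 + γ * ‖qfE 0 U‖ ^ 2)⁻¹) f := fun f => rfl
    simp_rw [e]
    rw [lintegral_indicator_const measurableSet_Ioo, Measure.restrict_apply measurableSet_Ioo,
      Set.inter_comm]
  rw [lintegral_congr_ae step]
  have hH : Measurable (fun s => ∫⁻ f in A, qfK γ s f) := hK.lintegral_prod_right'
  rw [← lintegral_map (f := fun s => ∫⁻ f in A, qfK γ s f) hH hT, qf_unif μ,
    lintegral_lintegral_swap hK.aemeasurable]
  apply lintegral_congr_ae
  refine ae_restrict_of_ae ?_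
  have : ∀ᵐ x : ℝ, x ≠ 0 := by rw [ae_iff]; simp
  filter_upwards [this] with f hf using qf_density γ ⟨h0, h1⟩ f hf
end
end

section
/- Let γ ∈ (0, 1]. Then ∫_0^{(1−γ)/2} f · (1/γ)·ln((1+γ)/(1−γ)) df + ∫_{(1−γ)/2}^{(1+γ)/2} f · (1/γ)·ln((1+γ)/(2f)) df = 1/4; i.e., the mean of the fidelity distribution of Haar-random locally rotated two-qubit states with Schmidt coefficients (√((1+γ)/2), √((1−γ)/2)) with respect to a fixed product state equals 1/4, independently of γ. -/
open MeasureTheory intervalIntegral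

/-- For `γ ∈ (0,1]`, the mean of the fidelity distribution of Haar-random
locally rotated two-qubit states with Schmidt coefficients `(√((1+γ)/2), √((1−γ)/2))` with
respect to a fixed product state equals `1/4`, independently of `γ`:
`∫₀^{(1−γ)/2} f·(1/γ)ln((1+γ)/(1−γ)) df + ∫_{(1−γ)/2}^{(1+γ)/2} f·(1/γ)ln((1+γ)/(2f)) df = 1/4`. -/
theorem mean_fidelity_qubit_eq_quarter (γ : ℝ) (hγ : γ ∈ Set.Ioc (0 : ℝ) 1) :
    (∫ f in (0 : ℝ)..((1 - γ) / 2), f * ((1 / γ) * Real.log ((1 + γ) / (1 - γ)))) +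
      (∫ f in ((1 - γ) / 2)..((1 + γ) / 2), f * ((1 / γ) * Real.log ((1 + γ) / (2 * f))))
      = 1 / 4 := by
  obtain ⟨h0, h1⟩ := hγ
  have hb : (1 + γ) / 2 ≠ 0 := by positivity
  have key : ∀ f : ℝ, f * ((1 / γ) * Real.log ((1 + γ) / (2 * f)))
      = (1 / γ) * (f * Real.log ((1 + γ) / 2) - f * Real.log f) := by
    intro f
    by_cases hf : f = 0
    · simp [hf]
    · rw [← div_div, Real.log_div hb hf]
      ring
  have hcont : Continuous
      (fun f : ℝ => (1 / γ) * (f * Real.log ((1 + γ) / 2) - f * Real.log f)) :=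
    continuous_const.mul ((continuous_id.mul continuous_const).sub Real.continuous_mul_log)
  have hint2 := intervalIntegral.integral_eq_sub_of_hasDerivAt_of_le
    (a := (1 - γ) / 2) (b := (1 + γ) / 2)
    (f := fun f : ℝ => (1 / γ) * (f ^ 2 / 2 * Real.log ((1 + γ) / 2)
      - f * (f * Real.log f) / 2 + f ^ 2 / 4))
    (f' := fun f : ℝ => (1 / γ) * (f * Real.log ((1 + γ) / 2) - f * Real.log f))
    (by linarith)
    (by
      have := Real.continuous_mul_log
      apply Continuous.continuousOn
      exact continuous_const.mul ((((continuous_id.pow 2).div_const 2).mul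
        continuous_const |>.sub ((continuous_id.mul this).div_const 2)).add
        ((continuous_id.pow 2).div_const 4)))
    (by
      intro x hx
      have hx0 : x ≠ 0 := by
        have := hx.1
        intro h
        linarith
      have e1 := ((hasDerivAt_id x).pow 2)
      have e2 := (hasDerivAt_id x).mul (Real.hasDerivAt_mul_log hx0)
      have e := ((((e1.div_const 2).mul_const (Real.log ((1 + γ) / 2))).sub
        (e2.div_const 2)).add (e1.div_const 4)).const_mul (1 / γ)
      refine HasDerivAt.congr_deriv e ?_
      simp only [id]
      push_cast
      ring)
    (hcont.intervalIntegrable _ _)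
  simp_rw [key]
  rw [hint2, intervalIntegral.integral_mul_const, integral_id]
  have hlog : (1 - γ) * Real.log ((1 + γ) / (1 - γ))
      = (1 - γ) * (Real.log ((1 + γ) / 2) - Real.log ((1 - γ) / 2)) := by
    by_cases h : 1 - γ = 0
    · simp [h]
    · rw [← Real.log_div hb (by simpa using h)]
      congr 2
      field_simp
  have hγ0 : γ ≠ 0 := h0.ne'
  field_simp
  linear_combination (4 * (1 - γ)) * hlog
end
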